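/- Let k be a field, i,j ≥ 1 natural numbers, and a, b ∈ k. Let S(k;i,j,a,b) be the quotient of R(k;i,j) by the two-sided ideal generated by x² − a·x + b. Then either S(k;i,j,a,b) is the trivial (zero) ring, or S(k;i,j,a,b) is isomorphic as a k-algebra to M₂(k). -/

import Mathlib

/-- The defining relations for `R(A;i,j)`: `x^i*y + y*x^j = 1` and `y^2 = 0`,
where `x` and `y` are the two generators of the free algebra. -/
inductive MatRel (A : Type*) [CommRing A] (i j : ℕ) :
    FreeAlgebra A (Fin 2) → FreeAlgebra A (Fin 2) → Prop
  | rel1 : MatRel A i j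
      (FreeAlgebra.ι A (0 : Fin 2) ^ i * FreeAlgebra.ι A (1 : Fin 2) +
        FreeAlgebra.ι A (1 : Fin 2) * FreeAlgebra.ι A (0 : Fin 2) ^ j) 1
  | rel2 : MatRel A i j (FreeAlgebra.ι A (1 : Fin 2) ^ 2) 0

/-- `R(A;i,j)`, the quotient of the free `A`-algebra on `x, y` by the two-sided ideal
generated by `x^i*y + y*x^j - 1` and `y^2`. -/
abbrev MatRing (A : Type*) [CommRing A] (i j : ℕ) : Type _ := RingQuot (MatRel A i j)

/-- The image of the generator `x` in `R(A;i,j)`. -/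
noncomputable def Xgen (A : Type*) [CommRing A] (i j : ℕ) : MatRing A i j :=
  RingQuot.mkAlgHom A (MatRel A i j) (FreeAlgebra.ι A (0 : Fin 2))

/-- The image of the generator `y` in `R(A;i,j)`. -/
noncomputable def Ygen (A : Type*) [CommRing A] (i j : ℕ) : MatRing A i j :=
  RingQuot.mkAlgHom A (MatRel A i j) (FreeAlgebra.ι A (1 : Fin 2))

/-- The extra relation `x^2 - a*x + b = 0` imposed on `R(k;i,j)`. -/
inductive SRel (k : Type*) [Field k] (i j : ℕ) (a b : k) :
    MatRing k i j → MatRing k i j → Prop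
  | rel : SRel k i j a b
      (Xgen k i j ^ 2 - a • Xgen k i j + algebraMap k (MatRing k i j) b) 0

/-- `S(k;i,j,a,b)`, the quotient of `R(k;i,j)` by the two-sided ideal
generated by `x^2 - a*x + b`. -/
abbrev SRing (k : Type*) [Field k] (i j : ℕ) (a b : k) : Type _ :=
  RingQuot (SRel k i j a b)

/-!
If `y ^ 2 = 0` and `u * y + y * v = 1`, then `y * u * y = y * v * y = y` and `y * v * u * y = 0`,
so `y * v`, `y`, `u * y * v`, `u * y` multiply like the four `2 × 2` matrix units and give a
homomorphism from `M₂(k)`, which is injective unless the target is zero. Its range contains `x` as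
soon as `y * g * y` is a scalar multiple of `y` for every polynomial `g` in `x`. For `u = x ^ i` and
`v = x ^ j` this follows from the quadratic relation: each `g` is a combination of `1` and `x`, so
`y * g * y` is a multiple of `y * x * y`, and writing `u = c * x + d` gives `c * (y * x * y) = y`.
-/

section MatrixFrame

variable {n A : Type*} [Fintype n] [DecidableEq n] [Semiring A]

/-- The elements `p i * y * q j` form a complete system of matrix units. They are encoded in this
factored form because the coefficients of an element `w` are then read off from the products
`y * q i * w * p j * y`. -/
structure IsMatrixFrame (y : A) (p q : n → A) : Prop where
  mul_mul_mul (i j : n) : y * q i * p j * y = if i = j then y else 0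
  sum_mul_mul : ∑ i, p i * y * q i = 1

namespace IsMatrixFrame

variable {y : A} {p q : n → A} (h : IsMatrixFrame y p q)
include h

lemma matrixUnit_mul_matrixUnit (i j k l : n) :
    p i * y * q j * (p k * y * q l) = if j = k then p i * y * q l else 0 := by
  calc p i * y * q j * (p k * y * q l) = p i * (y * q j * p k * y) * q l := by
        simp only [mul_assoc]
    _ = if j = k then p i * y * q l else 0 := by
        rw [h.mul_mul_mul]
        split_ifs <;> simp

variable (R : Type*) [CommSemiring R] [Algebra R A]

/-- The homomorphism from matrices over the scalars sending the standard matrix units to the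
matrix units `p i * y * q j`. -/
def toAlgHom : Matrix n n R →ₐ[R] A :=
  AlgHom.ofLinearMap
    { toFun := fun M => ∑ i, ∑ j, M i j • (p i * y * q j)
      map_add' := fun M N => by simp only [Matrix.add_apply, add_smul, Finset.sum_add_distrib]
      map_smul' := fun c M => by
        simp only [Matrix.smul_apply, smul_assoc, Finset.smul_sum, RingHom.id_apply] }
    (by simp [Matrix.one_apply, ite_smul, h.sum_mul_mul])
    (fun M N => by
      simp only [LinearMap.coe_mk, AddHom.coe_mk, Matrix.mul_apply, Finset.sum_mul_sum,
        smul_mul_smul_comm, h.matrixUnit_mul_matrixUnit, smul_ite, smul_zero, Finset.sum_smul]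
      refine Finset.sum_congr rfl fun i _ => ?_
      rw [Finset.sum_comm]
      simp only [Finset.sum_ite_irrel, Finset.sum_const_zero, Finset.sum_ite_eq',
        Finset.mem_univ, if_true])

lemma toAlgHom_apply (M : Matrix n n R) :
    h.toAlgHom R M = ∑ i, ∑ j, M i j • (p i * y * q j) := rfl

lemma toAlgHom_single_one (i j : n) :
    h.toAlgHom R (Matrix.single i j 1) = p i * y * q j := by
  simp [toAlgHom_apply, Matrix.single_apply, ite_and]

variable {R}

lemma mem_range_toAlgHom {w : A}
    (hw : ∀ i j, ∃ c : R, y * q i * w * p j * y = c • y) : w ∈ (h.toAlgHom R).range := by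
  choose c hc using hw
  refine ⟨Matrix.of c, ?_⟩
  calc h.toAlgHom R (Matrix.of c) = ∑ i, ∑ j, p i * (y * q i * w * p j * y) * q j := by
        simp only [toAlgHom_apply, Matrix.of_apply, hc, mul_smul_comm, smul_mul_assoc]
    _ = (∑ i, p i * y * q i) * w * ∑ j, p j * y * q j := by
        rw [Finset.sum_mul, Finset.sum_mul_sum]
        simp only [mul_assoc]
    _ = w := by rw [h.sum_mul_mul, one_mul, mul_one]

end IsMatrixFrame

end MatrixFrame

lemma isMatrixFrame_of_mul_add_mul_eq_one {A : Type*} [Ring A] {u v y : A} (hy : y ^ 2 = 0)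
    (huv : u * y + y * v = 1) : IsMatrixFrame y ![1, u] ![v, 1] := by
  rw [pow_two] at hy
  have hyuy : y * u * y = y := by
    calc y * u * y = y * (1 - y * v) := by rw [← huv, add_sub_cancel_right, mul_assoc]
      _ = y := by rw [mul_sub, ← mul_assoc, hy, zero_mul, sub_zero, mul_one]
  have hyvy : y * v * y = y := by
    calc y * v * y = (1 - u * y) * y := by rw [← huv, add_sub_cancel_left]
      _ = y := by rw [sub_mul, mul_assoc, hy, mul_zero, sub_zero, one_mul]
  have hyvuy : y * v * u * y = 0 := by
    calc y * v * u * y = (1 - u * y) * (u * y) := by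
          rw [← huv, add_sub_cancel_left, mul_assoc]
      _ = u * y - u * (y * u * y) := by noncomm_ring
      _ = 0 := by rw [hyuy, sub_self]
  refine ⟨fun i j => ?_, ?_⟩
  · fin_cases i <;> fin_cases j <;> simp [hy, hyuy, hyvy, hyvuy]
  · simpa [Fin.sum_univ_two, add_comm] using huv

lemma exists_eq_smul_add_algebraMap_of_mem_adjoin {k A : Type*} [CommRing k] [Ring A]
    [Algebra k A] {a b : k} {x w : A} (hx : x ^ 2 - a • x + algebraMap k A b = 0)
    (hw : w ∈ Algebra.adjoin k {x}) : ∃ c d : k, w = c • x + algebraMap k A d := by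
  induction hw using Algebra.adjoin_induction with
  | mem w hw => exact ⟨1, 0, by simpa using hw⟩
  | algebraMap d => exact ⟨0, d, by simp⟩
  | add w w' _ _ ih ih' =>
    obtain ⟨c, d, rfl⟩ := ih
    obtain ⟨c', d', rfl⟩ := ih'
    exact ⟨c + c', d + d', by rw [add_smul, map_add, add_add_add_comm]⟩
  | mul w w' _ _ ih ih' =>
    obtain ⟨c, d, rfl⟩ := ih
    obtain ⟨c', d', rfl⟩ := ih'
    have hxx : x * x = a • x - b • (1 : A) := by
      rw [← pow_two, ← Algebra.algebraMap_eq_smul_one, ← sub_eq_zero, ← hx]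
      abel
    refine ⟨c * c' * a + c * d' + d * c', d * d' - c * c' * b, ?_⟩
    simp only [Algebra.algebraMap_eq_smul_one, add_mul, mul_add, smul_mul_assoc, mul_smul_comm,
      hxx, one_mul, mul_one]
    module

section QuadraticGenerator

variable {k A : Type*} [Field k] [Ring A] [Algebra k A] {a b : k} {u v x y : A}

lemma exists_mul_mul_eq_smul_of_mem_adjoin (hx : x ^ 2 - a • x + algebraMap k A b = 0)
    (hu : u ∈ Algebra.adjoin k {x}) (hy : y ^ 2 = 0) (hyuy : y * u * y = y)
    {w : A} (hw : w ∈ Algebra.adjoin k {x}) : ∃ c : k, y * w * y = c • y := by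
  have hlin (c d : k) : y * (c • x + algebraMap k A d) * y = c • (y * x * y) := by
    rw [mul_add, add_mul, ← Algebra.commutes, mul_assoc (algebraMap k A d), ← pow_two, hy,
      mul_zero, add_zero, mul_smul_comm, smul_mul_assoc]
  obtain ⟨c, d, rfl⟩ := exists_eq_smul_add_algebraMap_of_mem_adjoin hx hu
  obtain ⟨c', d', rfl⟩ := exists_eq_smul_add_algebraMap_of_mem_adjoin hx hw
  rw [hlin] at hyuy
  rcases eq_or_ne c 0 with rfl | hc
  · have hy_zero : y = 0 := by rw [← hyuy, zero_smul]
    exact ⟨0, by simp [hy_zero]⟩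
  · have hyxy : y * x * y = c⁻¹ • y := (eq_inv_smul_iff₀ hc).mpr hyuy
    exact ⟨c' * c⁻¹, by rw [hlin, hyxy, mul_smul]⟩

theorem nonempty_algEquiv_matrix_of_adjoin_pair_eq_top [Nontrivial A]
    (hx : x ^ 2 - a • x + algebraMap k A b = 0) (hu : u ∈ Algebra.adjoin k {x})
    (hv : v ∈ Algebra.adjoin k {x}) (hy : y ^ 2 = 0) (huv : u * y + y * v = 1)
    (hgen : Algebra.adjoin k {x, y} = ⊤) :
    Nonempty (A ≃ₐ[k] Matrix (Fin 2) (Fin 2) k) := by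
  have hframe := isMatrixFrame_of_mul_add_mul_eq_one hy huv
  have hyuy : y * u * y = y := by simpa using hframe.mul_mul_mul 1 1
  let f := hframe.toAlgHom k
  have hx_mem : x ∈ f.range := by
    refine hframe.mem_range_toAlgHom fun i j => ?_
    have hp : ![1, u] j ∈ Algebra.adjoin k {x} := by
      fin_cases j
      exacts [one_mem _, hu]
    have hq : ![v, 1] i ∈ Algebra.adjoin k {x} := by
      fin_cases i
      exacts [hv, one_mem _]
    simpa only [mul_assoc] using exists_mul_mul_eq_smul_of_mem_adjoin hx hu hy hyuy
      (mul_mem (mul_mem hq (Algebra.self_mem_adjoin_singleton k x)) hp)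
  have hy_mem : y ∈ f.range :=
    ⟨Matrix.single 0 1 1, by simpa using hframe.toAlgHom_single_one k 0 1⟩
  have hf : Function.Surjective f := by
    rw [← AlgHom.range_eq_top, eq_top_iff, ← hgen, Algebra.adjoin_le_iff]
    exact Set.pair_subset hx_mem hy_mem
  exact ⟨(AlgEquiv.ofBijective f ⟨f.toRingHom.injective, hf⟩).symm⟩

end QuadraticGenerator

section Presentation

variable (A : Type*) [CommRing A] (i j : ℕ)

lemma Xgen_pow_mul_Ygen_add_Ygen_mul_Xgen_pow :
    Xgen A i j ^ i * Ygen A i j + Ygen A i j * Xgen A i j ^ j = 1 := by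
  simpa [Xgen, Ygen] using RingQuot.mkAlgHom_rel A (MatRel.rel1 (A := A) (i := i) (j := j))

lemma Ygen_sq : Ygen A i j ^ 2 = 0 := by
  simpa [Ygen] using RingQuot.mkAlgHom_rel A (MatRel.rel2 (A := A) (i := i) (j := j))

lemma adjoin_Xgen_Ygen : Algebra.adjoin A {Xgen A i j, Ygen A i j} = ⊤ := by
  have himage : ({Xgen A i j, Ygen A i j} : Set (MatRing A i j)) =
      RingQuot.mkAlgHom A (MatRel A i j) '' Set.range (FreeAlgebra.ι A) := by
    ext w
    simp [Xgen, Ygen, Fin.exists_fin_two, eq_comm]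
  rw [himage, ← AlgHom.map_adjoin, FreeAlgebra.adjoin_range_ι, Algebra.map_top,
    AlgHom.range_eq_top]
  exact RingQuot.mkAlgHom_surjective A _

end Presentation

theorem nonempty_algEquiv_matrix_of_matRing_surjective {k A : Type*} [Field k] [Ring A]
    [Algebra k A] [Nontrivial A] {i j : ℕ} {a b : k} {π : MatRing k i j →ₐ[k] A}
    (hπ : Function.Surjective π)
    (hx : π (Xgen k i j ^ 2 - a • Xgen k i j + algebraMap k _ b) = 0) :
    Nonempty (A ≃ₐ[k] Matrix (Fin 2) (Fin 2) k) := by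
  have hx' : π (Xgen k i j) ^ 2 - a • π (Xgen k i j) + algebraMap k A b = 0 := by
    simpa using hx
  have hy : π (Ygen k i j) ^ 2 = 0 := by
    rw [← map_pow, Ygen_sq, map_zero]
  have hxy : π (Xgen k i j) ^ i * π (Ygen k i j) + π (Ygen k i j) * π (Xgen k i j) ^ j = 1 := by
    simpa using congrArg π (Xgen_pow_mul_Ygen_add_Ygen_mul_Xgen_pow k i j)
  have hgen : Algebra.adjoin k {π (Xgen k i j), π (Ygen k i j)} = ⊤ := by
    rwa [← Set.image_pair, ← AlgHom.map_adjoin, adjoin_Xgen_Ygen, Algebra.map_top,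
      AlgHom.range_eq_top]
  have hx_mem := Algebra.self_mem_adjoin_singleton k (π (Xgen k i j))
  exact nonempty_algEquiv_matrix_of_adjoin_pair_eq_top hx' (pow_mem hx_mem i) (pow_mem hx_mem j) hy
    hxy hgen

theorem stmt16 (k : Type*) [Field k] (i j : ℕ) (hi : 1 ≤ i) (hj : 1 ≤ j) (a b : k) :
    Subsingleton (SRing k i j a b) ∨
      Nonempty (SRing k i j a b ≃ₐ[k] Matrix (Fin 2) (Fin 2) k) := by
  rcases subsingleton_or_nontrivial (SRing k i j a b) with hS | hS
  · exact Or.inl hS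
  right
  have hx : RingQuot.mkAlgHom k (SRel k i j a b)
      (Xgen k i j ^ 2 - a • Xgen k i j + algebraMap k (MatRing k i j) b) = 0 :=
    (RingQuot.mkAlgHom_rel k SRel.rel).trans (map_zero _)
  exact nonempty_algEquiv_matrix_of_matRing_surjective (A := SRing k i j a b)
    (RingQuot.mkAlgHom_surjective k _) hx
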